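/- Let α > 0 and let 1 ≤ ℓ < m be integers. Then (ℓ − 1/2)·binom(m,ℓ)·(1/2)_{(ℓ−1)}·Σ_{k=1}^{m} V^{1/2}_{m+1,k}(α)·2^{k−1}·C(m−ℓ, k−1; 1/2) = ( (1/2)·(ℓ − 1/2)·binom(m,ℓ)·(1/2)_{(ℓ−1)} / Γ(ℓ + 1/2) )·∫_0^∞ ∫_0^1 h^{−1/2}·f_{1/2}(h·p)·exp(−h·α² + α)·p^{m−ℓ}·(1−p)^{ℓ−1/2} dp dh. -/

import Mathlib

open MeasureTheory

/-- Rising factorial `(x)_(n) = x (x+1) ⋯ (x+n-1)`, with `(x)_(0) = 1`. -/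
def risingFactorial (x : ℝ) : ℕ → ℝ
  | 0 => 1
  | n + 1 => risingFactorial x n * (x + n)

/-- Generalized factorial coefficient
`C(m,k;σ) = (1/k!) ∑_{i=0}^k (-1)^i binom(k,i) (-iσ)_(m)`. -/
noncomputable def genFactCoeff (m k : ℕ) (σ : ℝ) : ℝ :=
  (1 / (k.factorial : ℝ)) *
    ∑ i ∈ Finset.range (k + 1),
      (-1 : ℝ) ^ i * (k.choose i : ℝ) * risingFactorial (-(i : ℝ) * σ) m

/-- The NGGP weight `V_{m,k}` with stability parameter `σ = 1/2`:
`V^{1/2}_{m,k}(α) = ((α/√2)^k/Γ(m)) ∫_0^∞ x^{m−1} (1/2+x)^{−(m−k/2)} e^{−α(√(1+2x)−1)} dx`. -/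
noncomputable def Vhalf (m k : ℕ) (α : ℝ) : ℝ :=
  ((α / Real.sqrt 2) ^ k / Real.Gamma m) *
    ∫ x in Set.Ioi (0 : ℝ),
      x ^ (m - 1) * ((1 / 2 : ℝ) + x) ^ (-((m : ℝ) - (k : ℝ) / 2)) *
        Real.exp (-α * (Real.sqrt (1 + 2 * x) - 1))

/-- The positive `1/2`-stable density `f_{1/2}(x) = (1/(2√π)) x^{−3/2} e^{−1/(4x)}`. -/
noncomputable def fHalf (x : ℝ) : ℝ :=
  (1 / (2 * Real.sqrt Real.pi)) * x ^ (-(3 / 2) : ℝ) * Real.exp (-1 / (4 * x))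

/-!
Write `P_n = ∑ₖ C(n,k;1/2) Xᵏ`. The half-stable law has Laplace transform `r ↦ e^(-√r)`, and the
recurrence of the generalized factorial coefficients says exactly that `n` differentiations turn
it into the tilted moment `∫ tⁿ e^(-rt) f_{1/2}(t) dt = r⁻ⁿ e^(-√r) P_n(√r)`. After `v = 2x` in the
weights `V`, the sum over `k` assembles `P_n(√r)` at `r = α² (1 + v)`, where `n = m - ℓ`; undoing
the moment formula writes it as a mixture over `t ~ f_{1/2}` of the integrals
`∫ v^(a-1) (1+v)^(-b) e^(-cv) dv = Γ(a) U(a, a-b+1, c)` with `c = α² t`. The double integral is also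
such a mixture, after `t = h p` and `p = 1 / (1 + v)`, but with `a` and `b` interchanged, and the
two are related by Kummer's transformation of `U`.
-/

section

open Real Set Polynomial ProbabilityTheory
open scoped ENNReal

/-! ### Generalized factorial coefficients -/

lemma genFactCoeff_zero_zero (σ : ℝ) : genFactCoeff 0 0 σ = 1 := by
  simp [genFactCoeff, risingFactorial]

lemma genFactCoeff_zero_succ (k : ℕ) (σ : ℝ) : genFactCoeff 0 (k + 1) σ = 0 := by
  have halt : ∑ i ∈ Finset.range (k + 1 + 1), (-1 : ℝ) ^ i * ((k + 1).choose i : ℝ) = 0 := by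
    exact_mod_cast Int.alternating_sum_range_choose_of_ne k.succ_ne_zero
  simp [genFactCoeff, risingFactorial, halt]

lemma genFactCoeff_succ_zero (n : ℕ) (σ : ℝ) :
    genFactCoeff (n + 1) 0 σ = n * genFactCoeff n 0 σ := by
  simp [genFactCoeff, risingFactorial, mul_comm]

lemma genFactCoeff_succ_succ (n k : ℕ) (σ : ℝ) :
    genFactCoeff (n + 1) (k + 1) σ =
      (n - (k + 1) * σ) * genFactCoeff n (k + 1) σ + σ * genFactCoeff n k σ := by
  have hextend : ∑ i ∈ Finset.range (k + 1),
      (-1 : ℝ) ^ i * (k.choose i : ℝ) * risingFactorial (-(i : ℝ) * σ) n =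
      ∑ i ∈ Finset.range (k + 1 + 1),
        (-1 : ℝ) ^ i * (k.choose i : ℝ) * risingFactorial (-(i : ℝ) * σ) n := by
    simp [Finset.sum_range_succ _ (k + 1)]
  simp only [genFactCoeff, hextend, Finset.mul_sum, ← Finset.sum_add_distrib]
  refine Finset.sum_congr rfl fun i hi => ?_
  have hchoose : ((k + 1).choose i : ℝ) * ((k + 1 : ℝ) - i) = k.choose i * (k + 1) := by
    have h := congrArg (Nat.cast (R := ℝ)) (Nat.choose_mul_succ_eq k i)
    push_cast [Nat.cast_sub (Finset.mem_range_succ_iff.mp hi)] at h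
    exact h.symm
  simp only [risingFactorial, Nat.factorial_succ]
  push_cast
  field_simp
  linear_combination σ * risingFactorial (-(i * σ)) n * hchoose

lemma genFactCoeff_eq_zero_of_lt {n k : ℕ} (h : n < k) (σ : ℝ) : genFactCoeff n k σ = 0 := by
  induction n generalizing k with
  | zero =>
    obtain ⟨k, rfl⟩ := Nat.exists_eq_add_one.mpr h
    exact genFactCoeff_zero_succ k σ
  | succ n ih =>
    obtain ⟨k, rfl⟩ := Nat.exists_eq_add_one.mpr (n.succ_pos.trans h)
    simp [genFactCoeff_succ_succ, ih (show n < k + 1 by lia), ih (show n < k by lia)]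

lemma genFactCoeff_nonneg (n k : ℕ) {σ : ℝ} (hσ : σ ∈ Icc 0 1) : 0 ≤ genFactCoeff n k σ := by
  induction n generalizing k with
  | zero => cases k <;> simp [genFactCoeff_zero_zero, genFactCoeff_zero_succ]
  | succ n ih =>
    cases k with
    | zero => exact genFactCoeff_succ_zero n σ ▸ mul_nonneg n.cast_nonneg (ih 0)
    | succ k =>
      rw [genFactCoeff_succ_succ]
      refine add_nonneg ?_ (mul_nonneg hσ.1 (ih k))
      rcases lt_or_ge n (k + 1) with hlt | hle
      · rw [genFactCoeff_eq_zero_of_lt hlt, mul_zero]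
      · refine mul_nonneg (sub_nonneg.mpr ?_) (ih (k + 1))
        calc (k + 1) * σ ≤ k + 1 := mul_le_of_le_one_right (by positivity) hσ.2
          _ ≤ n := by exact_mod_cast hle

/-- The generating polynomial `∑ₖ C(n,k;σ) Xᵏ` of the generalized factorial coefficients. -/
noncomputable def genFactPoly (σ : ℝ) (n : ℕ) : ℝ[X] :=
  ∑ k ∈ Finset.range (n + 1), monomial k (genFactCoeff n k σ)

lemma coeff_genFactPoly (σ : ℝ) (n k : ℕ) :
    (genFactPoly σ n).coeff k = genFactCoeff n k σ := by
  rw [genFactPoly, finsetSum_coeff]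
  simp only [coeff_monomial, Finset.sum_ite_eq', Finset.mem_range_succ_iff]
  split_ifs with h
  · rfl
  · exact (genFactCoeff_eq_zero_of_lt (not_le.mp h) σ).symm

lemma eval_genFactPoly (σ : ℝ) (n : ℕ) (y : ℝ) :
    (genFactPoly σ n).eval y = ∑ k ∈ Finset.range (n + 1), genFactCoeff n k σ * y ^ k := by
  simp [genFactPoly, eval_finsetSum]

lemma eval_genFactPoly_nonneg (n : ℕ) {σ y : ℝ} (hσ : σ ∈ Icc 0 1) (hy : 0 ≤ y) :
    0 ≤ (genFactPoly σ n).eval y := by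
  rw [eval_genFactPoly]
  exact Finset.sum_nonneg fun k _ => mul_nonneg (genFactCoeff_nonneg n k hσ) (pow_nonneg hy k)

lemma genFactPoly_zero (σ : ℝ) : genFactPoly σ 0 = 1 := by
  simp [genFactPoly, genFactCoeff_zero_zero]

lemma genFactPoly_succ (σ : ℝ) (n : ℕ) :
    genFactPoly σ (n + 1) = C (n : ℝ) * genFactPoly σ n +
      C σ * (X * (genFactPoly σ n - derivative (genFactPoly σ n))) := by
  ext k
  cases k with
  | zero => simp [coeff_genFactPoly, genFactCoeff_succ_zero]
  | succ k =>
    simp only [coeff_add, coeff_C_mul, coeff_X_mul, coeff_sub, coeff_derivative,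
      coeff_genFactPoly, genFactCoeff_succ_succ]
    ring

lemma iteratedDeriv_exp_neg_rpow (σ : ℝ) (n : ℕ) {x : ℝ} (hx : 0 < x) :
    iteratedDeriv n (fun x => exp (-x ^ σ)) x =
      (-1) ^ n * x ^ (-n : ℝ) * exp (-x ^ σ) * (genFactPoly σ n).eval (x ^ σ) := by
  induction n generalizing x with
  | zero => simp [genFactPoly_zero]
  | succ n ih =>
    have hσ := hasDerivAt_rpow_const (p := σ) (Or.inl hx.ne')
    have hn := hasDerivAt_rpow_const (p := (-n : ℝ)) (Or.inl hx.ne')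
    have hP := ((genFactPoly σ n).hasDerivAt (x ^ σ)).comp x hσ
    have hprod := ((hn.const_mul ((-1) ^ n)).mul hσ.neg.exp).mul hP
    have heq : iteratedDeriv n (fun x => exp (-x ^ σ)) =ᶠ[nhds x] fun x =>
        (-1) ^ n * x ^ (-n : ℝ) * exp (-x ^ σ) * (genFactPoly σ n).eval (x ^ σ) := by
      filter_upwards [Ioi_mem_nhds hx] with z hz using ih hz
    rw [iteratedDeriv_succ, (hprod.congr_of_eventuallyEq heq).deriv, genFactPoly_succ,
      show (-(n + 1 : ℕ) : ℝ) = -n - 1 by push_cast; ring]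
    simp only [eval_add, eval_mul, eval_sub, eval_C, eval_X, Function.comp_apply, Pi.mul_apply,
      Pi.neg_apply, rpow_sub_one hx.ne', pow_succ]
    field_simp
    ring

/-! ### Changes of variables -/

lemma lintegral_eq_lintegral_abs_deriv_mul_of_bijOn {s t : Set ℝ} {f f' : ℝ → ℝ}
    (hs : MeasurableSet s) (hf' : ∀ x ∈ s, HasDerivAt f (f' x) x) (hf : BijOn f s t)
    (g : ℝ → ℝ≥0∞) :
    ∫⁻ x in t, g x = ∫⁻ x in s, ENNReal.ofReal |f' x| * g (f x) := by
  rw [← hf.image_eq, lintegral_image_eq_lintegral_abs_deriv_mul hs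
    (fun x hx => (hf' x hx).hasDerivWithinAt) hf.injOn]

lemma lintegral_Ioi_eq_comp_mul_left {c : ℝ} (hc : 0 < c) (g : ℝ → ℝ≥0∞) :
    ∫⁻ x in Ioi 0, g x = ∫⁻ t in Ioi 0, ENNReal.ofReal c * g (c * t) := by
  have hbij : BijOn (fun t => c * t) (Ioi 0) (Ioi 0) :=
    InvOn.bijOn (f' := fun x => x / c)
      ⟨fun _ _ => mul_div_cancel_left₀ _ hc.ne', fun _ _ => mul_div_cancel₀ _ hc.ne'⟩
      (fun _ ht => mul_pos hc ht) fun _ hx => div_pos hx hc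
  simpa [abs_of_pos hc] using lintegral_eq_lintegral_abs_deriv_mul_of_bijOn measurableSet_Ioi
    (fun x _ => hasDerivAt_const_mul c) hbij g

lemma lintegral_Ioi_eq_comp_const_div {b : ℝ} (hb : 0 < b) (g : ℝ → ℝ≥0∞) :
    ∫⁻ x in Ioi 0, g x = ∫⁻ t in Ioi 0, ENNReal.ofReal (b / t ^ 2) * g (b / t) := by
  have hbij : BijOn (fun t => b / t) (Ioi 0) (Ioi 0) :=
    InvOn.bijOn (f' := fun t => b / t)
      ⟨fun _ _ => div_div_cancel₀ hb.ne', fun _ _ => div_div_cancel₀ hb.ne'⟩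
      (fun _ ht => div_pos hb ht) fun _ ht => div_pos hb ht
  have hderiv : ∀ t ∈ Ioi (0 : ℝ), HasDerivAt (fun t => b / t) (-(b / t ^ 2)) t := fun t ht => by
    simpa [div_eq_mul_inv] using (hasDerivAt_inv (ne_of_gt ht)).const_mul b
  rw [lintegral_eq_lintegral_abs_deriv_mul_of_bijOn measurableSet_Ioi hderiv hbij]
  refine setLIntegral_congr_fun measurableSet_Ioi fun t _ => ?_
  rw [abs_neg, abs_of_nonneg (by positivity)]

lemma lintegral_Ioi_eq_comp_inv_four_mul_sq (g : ℝ → ℝ≥0∞) :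
    ∫⁻ x in Ioi 0, g x =
      ∫⁻ s in Ioi 0, ENNReal.ofReal (1 / (2 * s ^ 3)) * g (1 / (4 * s ^ 2)) := by
  have hbij : BijOn (fun s : ℝ => 1 / (4 * s ^ 2)) (Ioi 0) (Ioi 0) := by
    refine InvOn.bijOn (f' := fun x => 1 / (2 * √x)) ⟨fun s hs => ?_, fun x hx => ?_⟩
      (fun s (hs : 0 < s) => by simp only [mem_Ioi]; positivity)
      (fun x (hx : 0 < x) => by simp only [mem_Ioi]; positivity)
    · have hsqrt : √(1 / (4 * s ^ 2)) = 1 / (2 * s) := by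
        rw [show 1 / (4 * s ^ 2) = (1 / (2 * s)) ^ 2 by ring,
          sqrt_sq (one_div_pos.mpr (mul_pos two_pos hs)).le]
      simp only [hsqrt]
      field_simp
    · simp only [div_pow, mul_pow, sq_sqrt (le_of_lt hx)]
      field_simp
      norm_num
  have hderiv : ∀ s ∈ Ioi (0 : ℝ),
      HasDerivAt (fun s : ℝ => 1 / (4 * s ^ 2)) (-(1 / (2 * s ^ 3))) s := fun s hs => by
    have hs0 : s ≠ 0 := ne_of_gt hs
    have h := ((hasDerivAt_pow 2 s).const_mul 4).inv (by positivity)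
    simp only [one_div]
    convert! h using 1
    push_cast
    field_simp
    norm_num
  rw [lintegral_eq_lintegral_abs_deriv_mul_of_bijOn measurableSet_Ioi hderiv hbij]
  refine setLIntegral_congr_fun measurableSet_Ioi fun s (hs : 0 < s) => ?_
  rw [abs_neg, abs_of_pos (by positivity)]

lemma bijOn_sub_const_div {b : ℝ} (hb : 0 < b) :
    BijOn (fun s => s - b / s) (Ioi 0) univ := by
  refine ⟨mapsTo_univ _ _, fun x (hx : 0 < x) y (hy : 0 < y) hxy => ?_, fun u _ => ?_⟩
  · have hfactor : (x - y) * (x * y + b) = 0 := by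
      field_simp at hxy
      linear_combination hxy
    have : x * y + b ≠ 0 := by positivity
    exact sub_eq_zero.mp ((mul_eq_zero.mp hfactor).resolve_right this)
  · have hlt : |u| < √(u ^ 2 + 4 * b) := lt_sqrt_of_sq_lt (by rw [sq_abs]; linarith)
    have hroot : 0 < u + √(u ^ 2 + 4 * b) := by linarith [neg_abs_le u]
    refine ⟨(u + √(u ^ 2 + 4 * b)) / 2, half_pos hroot, ?_⟩
    have hsq := sq_sqrt (by positivity : 0 ≤ u ^ 2 + 4 * b)
    simp only
    field_simp
    linear_combination hsq

lemma lintegral_eq_lintegral_Ioi_comp_sub_const_div {b : ℝ} (hb : 0 < b) (g : ℝ → ℝ≥0∞) :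
    ∫⁻ u, g u = ∫⁻ s in Ioi 0, ENNReal.ofReal (1 + b / s ^ 2) * g (s - b / s) := by
  have hderiv : ∀ s ∈ Ioi (0 : ℝ), HasDerivAt (fun s => s - b / s) (1 + b / s ^ 2) s :=
    fun s hs => by
      simpa [div_eq_mul_inv] using
        (hasDerivAt_id' s).fun_sub ((hasDerivAt_inv (ne_of_gt hs)).const_mul b)
  rw [← setLIntegral_univ, lintegral_eq_lintegral_abs_deriv_mul_of_bijOn measurableSet_Ioi hderiv
    (bijOn_sub_const_div hb)]
  refine setLIntegral_congr_fun measurableSet_Ioi fun s _ => ?_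
  rw [abs_of_nonneg (by positivity)]

-- Cauchy–Schlömilch: the involution `s ↦ b / s` turns the weight `b / s ^ 2` into `1`.
lemma two_mul_lintegral_Ioi_comp_sub_const_div {b : ℝ} (hb : 0 < b) {g : ℝ → ℝ≥0∞}
    (hg : Measurable g) (heven : ∀ u, g (-u) = g u) :
    2 * ∫⁻ s in Ioi 0, g (s - b / s) = ∫⁻ u, g u := by
  have hinv : ∫⁻ s in Ioi 0, g (s - b / s) =
      ∫⁻ s in Ioi 0, ENNReal.ofReal (b / s ^ 2) * g (s - b / s) := by
    rw [lintegral_Ioi_eq_comp_const_div hb]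
    refine setLIntegral_congr_fun measurableSet_Ioi fun s _ => ?_
    simp only [div_div_cancel₀ hb.ne', ← heven (s - b / s), neg_sub]
  rw [lintegral_eq_lintegral_Ioi_comp_sub_const_div hb]
  calc 2 * ∫⁻ s in Ioi 0, g (s - b / s)
      = ∫⁻ s in Ioi 0, (g (s - b / s) + ENNReal.ofReal (b / s ^ 2) * g (s - b / s)) := by
        rw [lintegral_add_left (by fun_prop), ← hinv, two_mul]
    _ = ∫⁻ s in Ioi 0, ENNReal.ofReal (1 + b / s ^ 2) * g (s - b / s) := by
        refine setLIntegral_congr_fun measurableSet_Ioi fun s _ => ?_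
        rw [ENNReal.ofReal_add one_pos.le (by positivity), add_mul, ENNReal.ofReal_one, one_mul]

lemma lintegral_Ioi_exp_neg_sub_const_div_sq {b : ℝ} (hb : 0 < b) :
    ∫⁻ s in Ioi 0, ENNReal.ofReal (exp (-(s - b / s) ^ 2)) = ENNReal.ofReal (√π / 2) := by
  have hgauss : ∫⁻ u : ℝ, ENNReal.ofReal (exp (-u ^ 2)) = ENNReal.ofReal √π := by
    have hint : Integrable fun u : ℝ => exp (-u ^ 2) := by
      simpa using integrable_exp_neg_mul_sq one_pos
    rw [← ofReal_integral_eq_lintegral_ofReal hint (.of_forall fun u => (exp_pos _).le)]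
    simpa using congrArg ENNReal.ofReal (integral_gaussian 1)
  have htwo := two_mul_lintegral_Ioi_comp_sub_const_div hb
    (g := fun u => ENNReal.ofReal (exp (-u ^ 2))) (by fun_prop) (by simp)
  rw [ENNReal.ofReal_div_of_pos two_pos, ← hgauss, ← htwo, ENNReal.ofReal_ofNat,
    mul_comm, ENNReal.mul_div_cancel_right two_ne_zero ENNReal.ofNat_ne_top]

/-! ### The positive half-stable law -/

@[fun_prop]
lemma measurable_fHalf : Measurable fHalf := by
  unfold fHalf
  fun_prop

lemma fHalf_nonneg {t : ℝ} (ht : 0 ≤ t) : 0 ≤ fHalf t := by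
  unfold fHalf
  positivity

lemma fHalf_inv_four_mul_sq {s : ℝ} (hs : 0 < s) :
    fHalf (1 / (4 * s ^ 2)) = 4 * s ^ 3 / √π * exp (-s ^ 2) := by
  have hrpow : (1 / (4 * s ^ 2)) ^ (-(3 / 2) : ℝ) = (2 * s) ^ 3 := by
    rw [show 1 / (4 * s ^ 2) = ((2 * s) ^ 2)⁻¹ by ring, inv_rpow (by positivity),
      rpow_neg (by positivity), inv_inv, ← rpow_natCast, ← rpow_mul (by positivity),
      ← rpow_natCast]
    norm_num
  rw [fHalf, hrpow, show -1 / (4 * (1 / (4 * s ^ 2))) = -s ^ 2 by field_simp]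
  ring

/-- The positive `1/2`-stable law, i.e. the measure on `(0, ∞)` with density `fHalf`. -/
noncomputable def halfStable : Measure ℝ :=
  (volume.restrict (Ioi 0)).withDensity fun t => ENNReal.ofReal (fHalf t)

instance : SFinite halfStable := by
  unfold halfStable
  infer_instance

lemma lintegral_halfStable {g : ℝ → ℝ≥0∞} (hg : Measurable g) :
    ∫⁻ t, g t ∂halfStable = ∫⁻ t in Ioi 0, ENNReal.ofReal (fHalf t) * g t :=
  lintegral_withDensity_eq_lintegral_mul _ (by fun_prop) hg

lemma ae_halfStable_pos : ∀ᵐ t ∂halfStable, 0 < t :=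
  (withDensity_absolutelyContinuous _ _).ae_le (ae_restrict_mem measurableSet_Ioi)

lemma lintegral_exp_neg_mul_halfStable {r : ℝ} (hr : 0 < r) :
    ∫⁻ t, ENNReal.ofReal (exp (-(r * t))) ∂halfStable = ENNReal.ofReal (exp (-√r)) := by
  have hsub : ∀ s ∈ Ioi (0 : ℝ), ENNReal.ofReal (1 / (2 * s ^ 3)) *
      (ENNReal.ofReal (fHalf (1 / (4 * s ^ 2))) *
        ENNReal.ofReal (exp (-(r * (1 / (4 * s ^ 2)))))) =
      ENNReal.ofReal (2 / √π * exp (-√r)) * ENNReal.ofReal (exp (-(s - √r / 2 / s) ^ 2)) := by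
    intro s (hs : 0 < s)
    have hexp : exp (-s ^ 2) * exp (-(r * (1 / (4 * s ^ 2)))) =
        exp (-√r) * exp (-(s - √r / 2 / s) ^ 2) := by
      rw [← exp_add, ← exp_add]
      congr 1
      field_simp
      linear_combination 4 * sq_sqrt hr.le
    rw [fHalf_inv_four_mul_sq hs, ← ENNReal.ofReal_mul (by positivity),
      ← ENNReal.ofReal_mul (by positivity), ← ENNReal.ofReal_mul (by positivity),
      mul_assoc (4 * s ^ 3 / √π), hexp]
    congr 1
    field_simp
    norm_num
  rw [lintegral_halfStable (by fun_prop), lintegral_Ioi_eq_comp_inv_four_mul_sq,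
    setLIntegral_congr_fun measurableSet_Ioi hsub, lintegral_const_mul _ (by fun_prop),
    lintegral_Ioi_exp_neg_sub_const_div_sq (by positivity), ← ENNReal.ofReal_mul (by positivity)]
  congr 1
  field_simp

lemma integrable_exp_neg_mul_halfStable {r : ℝ} (hr : 0 < r) :
    Integrable (fun t => exp (-(r * t))) halfStable := by
  refine ⟨by fun_prop, ?_⟩
  rw [hasFiniteIntegral_iff_ofReal (.of_forall fun t => (exp_pos _).le),
    lintegral_exp_neg_mul_halfStable hr]
  exact ENNReal.ofReal_lt_top

lemma mgf_neg_halfStable {r : ℝ} (hr : 0 < r) :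
    mgf (fun t => -t) halfStable r = exp (-√r) := by
  simp only [mgf, mul_neg]
  rw [integral_eq_lintegral_of_nonneg_ae (.of_forall fun t => (exp_pos _).le) (by fun_prop),
    lintegral_exp_neg_mul_halfStable hr, ENNReal.toReal_ofReal (exp_pos _).le]

lemma mem_interior_integrableExpSet_neg_halfStable {r : ℝ} (hr : 0 < r) :
    r ∈ interior (integrableExpSet (fun t => -t) halfStable) :=
  mem_interior.mpr ⟨Ioi 0, fun s hs => by
    simpa [integrableExpSet] using integrable_exp_neg_mul_halfStable hs, isOpen_Ioi, hr⟩

lemma integral_pow_mul_exp_neg_mul_halfStable (n : ℕ) {r : ℝ} (hr : 0 < r) :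
    ∫ t, t ^ n * exp (-(r * t)) ∂halfStable =
      r ^ (-n : ℝ) * (exp (-√r) * (genFactPoly (1 / 2) n).eval √r) := by
  have heq : mgf (fun t => -t) halfStable =ᶠ[nhds r] fun r => exp (-r ^ (1 / 2 : ℝ)) := by
    filter_upwards [Ioi_mem_nhds hr] with s hs
    rw [mgf_neg_halfStable hs, sqrt_eq_rpow]
  have hmoment := iteratedDeriv_mgf (mem_interior_integrableExpSet_neg_halfStable hr) n
  rw [heq.iteratedDeriv_eq n, iteratedDeriv_exp_neg_rpow _ n hr, ← sqrt_eq_rpow] at hmoment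
  calc ∫ t, t ^ n * exp (-(r * t)) ∂halfStable
      = (-1) ^ n * ∫ t, (-t) ^ n * exp (r * -t) ∂halfStable := by
        rw [← integral_const_mul]
        congr 1 with t
        rw [neg_pow t, ← mul_assoc, ← mul_assoc, ← mul_pow]
        simp
    _ = _ := by
        rw [← hmoment]
        simp only [← mul_assoc, ← mul_pow]
        simp

lemma lintegral_pow_mul_exp_neg_mul_halfStable (n : ℕ) {r : ℝ} (hr : 0 < r) :
    ∫⁻ t, ENNReal.ofReal (t ^ n * exp (-(r * t))) ∂halfStable =
      ENNReal.ofReal (r ^ (-n : ℝ) * (exp (-√r) * (genFactPoly (1 / 2) n).eval √r)) := by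
  have hint : Integrable (fun t => t ^ n * exp (-(r * t))) halfStable := by
    have h := integrable_pow_mul_exp_of_mem_interior_integrableExpSet
      (mem_interior_integrableExpSet_neg_halfStable hr) n
    refine (h.const_mul ((-1) ^ n)).congr (.of_forall fun t => ?_)
    simp only [neg_pow t, ← mul_assoc, ← mul_pow]
    simp
  rw [← integral_pow_mul_exp_neg_mul_halfStable n hr, ofReal_integral_eq_lintegral_ofReal hint]
  filter_upwards [ae_halfStable_pos] with t ht
  simp only [Pi.zero_apply]
  positivity

/-! ### Tricomi's integral and Kummer's transformation -/

/-- The integral `∫₀^∞ v^(a-1) (1+v)^(-b) e^(-cv) dv = Γ(a) U(a, a - b + 1, c)`, where `U` is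
Tricomi's confluent hypergeometric function. -/
noncomputable def tricomiIntegral (a b c : ℝ) : ℝ≥0∞ :=
  ∫⁻ v in Ioi 0, ENNReal.ofReal (v ^ (a - 1) * (1 + v) ^ (-b) * exp (-(c * v)))

lemma lintegral_rpow_mul_exp_neg_mul_Ioi {a r : ℝ} (ha : 0 < a) (hr : 0 < r) :
    ∫⁻ t in Ioi 0, ENNReal.ofReal (t ^ (a - 1) * exp (-(r * t))) =
      ENNReal.ofReal (r ^ (-a) * Gamma a) := by
  have hval := integral_rpow_mul_exp_neg_mul_Ioi ha hr
  have hint : IntegrableOn (fun t : ℝ => t ^ (a - 1) * exp (-(r * t))) (Ioi 0) :=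
    .of_integral_ne_zero (by rw [hval]; have := Gamma_pos_of_pos ha; positivity)
  rw [← ofReal_integral_eq_lintegral_ofReal hint, hval, one_div, inv_rpow hr.le, rpow_neg hr.le]
  filter_upwards [ae_restrict_mem measurableSet_Ioi] with t (ht : 0 < t)
  simp only [Pi.zero_apply]
  positivity

lemma ofReal_mul_tricomiIntegral (a : ℝ) {b c : ℝ} (hb : 0 < b) (hc : 0 < c) :
    ENNReal.ofReal (c ^ (-b) * Gamma b) * tricomiIntegral a b c =
      ∫⁻ v in Ioi 0, ∫⁻ z in Ioi 0,
        ENNReal.ofReal (v ^ (a - 1) * z ^ (b - 1) * exp (-(c * (v + z + v * z)))) := by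
  rw [tricomiIntegral, ← lintegral_const_mul _ (by fun_prop)]
  refine setLIntegral_congr_fun measurableSet_Ioi fun v (hv : 0 < v) => ?_
  have hfactor : ∀ z, ENNReal.ofReal (v ^ (a - 1) * z ^ (b - 1) * exp (-(c * (v + z + v * z)))) =
      ENNReal.ofReal (v ^ (a - 1) * exp (-(c * v))) *
        ENNReal.ofReal (z ^ (b - 1) * exp (-(c * (1 + v) * z))) := fun z => by
    rw [← ENNReal.ofReal_mul (by positivity),
      show -(c * (v + z + v * z)) = -(c * v) + -(c * (1 + v) * z) by ring, exp_add]
    ring_nf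
  simp only [hfactor]
  rw [lintegral_const_mul _ (by fun_prop),
    lintegral_rpow_mul_exp_neg_mul_Ioi hb (by positivity), ← ENNReal.ofReal_mul (by positivity),
    ← ENNReal.ofReal_mul (by positivity), mul_rpow hc.le (by positivity)]
  ring_nf

lemma tricomiIntegral_eq_mul_swap {a b c : ℝ} (ha : 0 < a) (hb : 0 < b) (hc : 0 < c) :
    tricomiIntegral a b c =
      ENNReal.ofReal (Gamma a / Gamma b * c ^ (b - a)) * tricomiIntegral b a c := by
  have hsymm : ENNReal.ofReal (c ^ (-b) * Gamma b) * tricomiIntegral a b c =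
      ENNReal.ofReal (c ^ (-a) * Gamma a) * tricomiIntegral b a c := by
    rw [ofReal_mul_tricomiIntegral a hb hc, ofReal_mul_tricomiIntegral b ha hc,
      lintegral_lintegral_swap (by fun_prop)]
    refine lintegral_congr fun z => lintegral_congr fun v => ?_
    ring_nf
  have hΓa := Gamma_pos_of_pos ha
  have hΓb := Gamma_pos_of_pos hb
  have hpos : 0 < c ^ (-b) * Gamma b := by positivity
  have hcoef : c ^ (-a) * Gamma a = c ^ (-b) * Gamma b * (Gamma a / Gamma b * c ^ (b - a)) := by
    rw [sub_eq_neg_add, rpow_add hc, rpow_neg hc.le b]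
    field_simp
  rw [hcoef, ENNReal.ofReal_mul hpos.le, mul_assoc] at hsymm
  exact (ENNReal.mul_right_inj (ENNReal.ofReal_pos.mpr hpos).ne' ENNReal.ofReal_ne_top).mp hsymm

lemma lintegral_Ioo_zero_one_eq_comp_inv_one_add (g : ℝ → ℝ≥0∞) :
    ∫⁻ p in Ioo 0 1, g p = ∫⁻ v in Ioi 0, ENNReal.ofReal (1 / (1 + v) ^ 2) * g (1 + v)⁻¹ := by
  have hbij : BijOn (fun v : ℝ => (1 + v)⁻¹) (Ioi 0) (Ioo 0 1) :=
    InvOn.bijOn (f' := fun p => p⁻¹ - 1) ⟨fun _ _ => by simp, fun _ _ => by simp⟩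
      (fun v (hv : 0 < v) => ⟨by positivity, inv_lt_one_of_one_lt₀ (by linarith)⟩)
      fun p hp => sub_pos.mpr ((one_lt_inv₀ hp.1).mpr hp.2)
  have hderiv : ∀ v ∈ Ioi (0 : ℝ),
      HasDerivAt (fun v : ℝ => (1 + v)⁻¹) (-(1 / (1 + v) ^ 2)) v := fun v (hv : 0 < v) => by
    simpa [neg_div] using ((hasDerivAt_id' v).const_add 1).fun_inv (by positivity)
  rw [lintegral_eq_lintegral_abs_deriv_mul_of_bijOn measurableSet_Ioi hderiv hbij]
  refine setLIntegral_congr_fun measurableSet_Ioi fun v _ => ?_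
  rw [abs_neg, abs_of_nonneg (by positivity)]

lemma lintegral_Ioo_rpow_mul_exp_neg_div (a b c : ℝ) :
    ∫⁻ p in Ioo 0 1, ENNReal.ofReal (p ^ (b - a - 1) * (1 - p) ^ (a - 1) * exp (-(c / p))) =
      ENNReal.ofReal (exp (-c)) * tricomiIntegral a b c := by
  rw [lintegral_Ioo_zero_one_eq_comp_inv_one_add, tricomiIntegral,
    ← lintegral_const_mul _ (by fun_prop)]
  refine setLIntegral_congr_fun measurableSet_Ioi fun v (hv : 0 < v) => ?_
  have hv1 : 0 < 1 + v := by positivity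
  have hpow : 1 / (1 + v) ^ 2 * ((1 + v)⁻¹ ^ (b - a - 1) * ((1 + v)⁻¹) ^ (a - 1)) =
      (1 + v) ^ (-b) := by
    rw [← rpow_add (by positivity), inv_rpow hv1.le, ← rpow_neg hv1.le, one_div,
      ← rpow_natCast, ← rpow_neg hv1.le, ← rpow_add hv1]
    congr 1
    push_cast
    ring
  rw [← ENNReal.ofReal_mul (by positivity), ← ENNReal.ofReal_mul (by positivity), ← hpow,
    show 1 - (1 + v)⁻¹ = v * (1 + v)⁻¹ by field_simp; ring, mul_rpow hv.le (by positivity),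
    show -(c / (1 + v)⁻¹) = -c + -(c * v) by rw [div_inv_eq_mul]; ring, exp_add]
  ring_nf

/-! ### Both sides as mixtures over the half-stable law -/

lemma lintegral_rpow_mul_exp_neg_sqrt_mul_genFactPoly (a b : ℝ) (n : ℕ) {r : ℝ} (hr : 0 < r) :
    ∫⁻ v in Ioi 0, ENNReal.ofReal (v ^ (a - 1) * (1 + v) ^ (-(b + n)) *
        (exp (-√(r * (1 + v))) * (genFactPoly (1 / 2) n).eval √(r * (1 + v)))) =
      ∫⁻ t, ENNReal.ofReal ((r * t) ^ n * exp (-(r * t))) * tricomiIntegral a b (r * t)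
        ∂halfStable := by
  have hmix : ∀ v ∈ Ioi (0 : ℝ), ENNReal.ofReal (v ^ (a - 1) * (1 + v) ^ (-(b + n)) *
        (exp (-√(r * (1 + v))) * (genFactPoly (1 / 2) n).eval √(r * (1 + v)))) =
      ∫⁻ t, ENNReal.ofReal ((r * t) ^ n * exp (-(r * t))) *
        ENNReal.ofReal (v ^ (a - 1) * (1 + v) ^ (-b) * exp (-(r * t * v))) ∂halfStable := by
    intro v (hv : 0 < v)
    have hv1 : 0 < 1 + v := by positivity
    have hweight : v ^ (a - 1) * (1 + v) ^ (-(b + n)) =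
        v ^ (a - 1) * r ^ n * (1 + v) ^ (-b) * (r * (1 + v)) ^ (-n : ℝ) := by
      rw [mul_rpow hr.le hv1.le, neg_add, rpow_add hv1, rpow_neg hr.le, rpow_natCast]
      field_simp
    rw [hweight, mul_assoc, ENNReal.ofReal_mul (by positivity),
      ← lintegral_pow_mul_exp_neg_mul_halfStable n (by positivity),
      ← lintegral_const_mul _ (by fun_prop)]
    refine lintegral_congr_ae ?_
    filter_upwards [ae_halfStable_pos] with t ht
    rw [← ENNReal.ofReal_mul (by positivity), ← ENNReal.ofReal_mul (by positivity), mul_pow,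
      show -(r * (1 + v) * t) = -(r * t) + -(r * t * v) by ring, exp_add]
    ring_nf
  rw [setLIntegral_congr_fun measurableSet_Ioi hmix, lintegral_lintegral_swap (by fun_prop)]
  exact lintegral_congr fun t => lintegral_const_mul _ (by fun_prop)

/-- The unnormalized density at `(h, p) ∈ (0, ∞) × (0, 1)` of the total mass `h` of the random
measure and the share `1 - p` of it carried by a single atom. An atom seen `ℓ` times among `m`
observations corresponds to `n = m - ℓ` and `q = ℓ - 1 / 2`. -/
noncomputable def massShareDensity (α : ℝ) (n : ℕ) (q h p : ℝ) : ℝ :=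
  h ^ (-(1 / 2) : ℝ) * fHalf (h * p) * exp (-h * α ^ 2 + α) * p ^ n * (1 - p) ^ q

lemma measurable_massShareDensity (α : ℝ) (n : ℕ) (q : ℝ) :
    Measurable (Function.uncurry (massShareDensity α n q)) := by
  unfold massShareDensity
  fun_prop

lemma massShareDensity_nonneg (α : ℝ) (n : ℕ) (q : ℝ) {h p : ℝ} (hh : 0 ≤ h)
    (hp : p ∈ Icc 0 1) : 0 ≤ massShareDensity α n q h p := by
  have hf := fHalf_nonneg (mul_nonneg hh hp.1)
  have hq := rpow_nonneg (sub_nonneg.mpr hp.2) q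
  have hpn := pow_nonneg hp.1 n
  unfold massShareDensity
  positivity

lemma lintegral_Ioi_massShareDensity (α : ℝ) (n : ℕ) (q : ℝ) {p : ℝ} (hp : p ∈ Ioo 0 1) :
    ∫⁻ h in Ioi 0, ENNReal.ofReal (massShareDensity α n q h p) =
      ∫⁻ t, ENNReal.ofReal (exp α * t ^ (-(1 / 2) : ℝ)) *
        ENNReal.ofReal (p ^ (n - 1 / 2 : ℝ) * (1 - p) ^ q * exp (-(α ^ 2 * t / p)))
          ∂halfStable := by
  have hp0 := hp.1
  rw [lintegral_halfStable (by fun_prop), lintegral_Ioi_eq_comp_mul_left (inv_pos.mpr hp0)]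
  refine setLIntegral_congr_fun measurableSet_Ioi fun t (ht : 0 < t) => ?_
  have hf := fHalf_nonneg ht.le
  have hpow : p ^ (n - 1 / 2 : ℝ) = p⁻¹ * p⁻¹ ^ (-(1 / 2) : ℝ) * p ^ n := by
    rw [inv_rpow hp0.le, ← rpow_neg hp0.le, ← rpow_neg_one, ← rpow_natCast, ← rpow_add hp0,
      ← rpow_add hp0]
    ring_nf
  rw [← ENNReal.ofReal_mul (by positivity), ← ENNReal.ofReal_mul (by positivity),
    ← ENNReal.ofReal_mul (by positivity), massShareDensity, hpow,
    mul_rpow (inv_pos.mpr hp0).le ht.le, show p⁻¹ * t * p = t by field_simp, exp_add,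
    show -(p⁻¹ * t) * α ^ 2 = -(α ^ 2 * t / p) by ring]
  ring_nf

lemma lintegral_massShareDensity (α : ℝ) (n : ℕ) (q : ℝ) :
    ∫⁻ h in Ioi 0, ∫⁻ p in Ioo 0 1, ENNReal.ofReal (massShareDensity α n q h p) =
      ∫⁻ t, ENNReal.ofReal (exp α * t ^ (-(1 / 2) : ℝ) * exp (-(α ^ 2 * t))) *
        tricomiIntegral (q + 1) (n + q + 3 / 2) (α ^ 2 * t) ∂halfStable := by
  rw [lintegral_lintegral_swap (measurable_massShareDensity α n q).ennreal_ofReal.aemeasurable,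
    setLIntegral_congr_fun measurableSet_Ioo fun p hp => lintegral_Ioi_massShareDensity α n q hp,
    lintegral_lintegral_swap (by fun_prop)]
  refine lintegral_congr_ae ?_
  filter_upwards [ae_halfStable_pos] with t ht
  rw [lintegral_const_mul _ (by fun_prop), ENNReal.ofReal_mul (q := exp _) (by positivity),
    mul_assoc, ← lintegral_Ioo_rpow_mul_exp_neg_div]
  ring_nf

lemma lintegral_massShareDensity_eq_mul_lintegral {α : ℝ} (hα : 0 < α) (n : ℕ) {q : ℝ}
    (hq : -1 < q) :
    ∫⁻ h in Ioi 0, ∫⁻ p in Ioo 0 1, ENNReal.ofReal (massShareDensity α n q h p) =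
      ENNReal.ofReal (exp α * α * Gamma (q + 1) / Gamma (n + q + 3 / 2)) *
        ∫⁻ v in Ioi 0, ENNReal.ofReal (v ^ (n + q + 3 / 2 - 1) * (1 + v) ^ (-(q + 1 + n)) *
          (exp (-√(α ^ 2 * (1 + v))) * (genFactPoly (1 / 2) n).eval √(α ^ 2 * (1 + v)))) := by
  have hb : 0 < q + 1 := by linarith
  have ha : 0 < n + q + 3 / 2 := by linarith [n.cast_nonneg (α := ℝ)]
  rw [lintegral_massShareDensity, lintegral_rpow_mul_exp_neg_sqrt_mul_genFactPoly _ _ _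
    (by positivity), ← lintegral_const_mul' _ _ ENNReal.ofReal_ne_top]
  refine lintegral_congr_ae ?_
  filter_upwards [ae_halfStable_pos] with t ht
  have hΓ : Gamma (q + 1) / Gamma (n + q + 3 / 2) *
      (Gamma (n + q + 3 / 2) / Gamma (q + 1)) = 1 := by
    rw [div_mul_div_cancel₀ (Gamma_pos_of_pos ha).ne', div_self (Gamma_pos_of_pos hb).ne']
  have hpow : α * ((α ^ 2 * t) ^ n * (α ^ 2 * t) ^ (q + 1 - (n + q + 3 / 2))) =
      t ^ (-(1 / 2) : ℝ) := by
    rw [← rpow_natCast (α ^ 2 * t), ← rpow_add (by positivity),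
      show (n : ℝ) + (q + 1 - (n + q + 3 / 2)) = -(1 / 2) by ring,
      mul_rpow (by positivity) ht.le, rpow_neg (by positivity) (1 / 2), ← sqrt_eq_rpow,
      sqrt_sq hα.le, mul_inv_cancel_left₀ hα.ne']
  rw [tricomiIntegral_eq_mul_swap ha hb (by positivity), ← mul_assoc, ← mul_assoc,
    ← ENNReal.ofReal_mul (by positivity), ← ENNReal.ofReal_mul (by positivity), ← hpow]
  congr 2
  linear_combination (-(exp α * α * ((α ^ 2 * t) ^ n *
    (α ^ 2 * t) ^ (q + 1 - (n + q + 3 / 2))) * exp (-(α ^ 2 * t)))) * hΓ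

/-! ### The weights `V` and the identity -/

lemma integrableOn_rpow_mul_exp_neg_sqrt {a r : ℝ} (ha : 0 < a) (hr : 0 < r) :
    IntegrableOn (fun v => v ^ (a - 1) * exp (-√(r * v))) (Ioi 0) := by
  refine (integrableOn_rpow_mul_exp_neg_mul_rpow (s := a - 1) (by linarith) one_half_pos
    (sqrt_pos.mpr hr)).congr_fun (fun v _ => ?_) measurableSet_Ioi
  simp only [sqrt_mul hr.le, neg_mul, ← sqrt_eq_rpow]

lemma integrableOn_rpow_mul_one_add_rpow_mul_exp_neg_sqrt {a r : ℝ} (ha : 0 < a) (s : ℝ)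
    (hr : 0 < r) :
    IntegrableOn (fun v => v ^ (a - 1) * (1 + v) ^ s * exp (-√(r * (1 + v)))) (Ioi 0) := by
  obtain ⟨k, hk⟩ := exists_nat_ge s
  refine (((integrableOn_rpow_mul_exp_neg_sqrt ha hr).add (integrableOn_rpow_mul_exp_neg_sqrt
    (show 0 < a + k by positivity) hr)).const_mul (2 ^ (k - 1))).mono' (by fun_prop) ?_
  filter_upwards [ae_restrict_mem measurableSet_Ioi] with v (hv : 0 < v)
  have hpow : (1 + v) ^ s ≤ 2 ^ (k - 1) * (1 + v ^ k) := calc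
    (1 + v) ^ s ≤ (1 + v) ^ k := by
      rw [← rpow_natCast]
      exact rpow_le_rpow_of_exponent_le (by linarith) hk
    _ ≤ 2 ^ (k - 1) * (1 + v ^ k) := by simpa using add_pow_le zero_le_one hv.le k
  have hexp : exp (-√(r * (1 + v))) ≤ exp (-√(r * v)) := by
    gcongr
    linarith
  rw [norm_of_nonneg (by positivity)]
  calc v ^ (a - 1) * (1 + v) ^ s * exp (-√(r * (1 + v)))
      ≤ v ^ (a - 1) * (2 ^ (k - 1) * (1 + v ^ k)) * exp (-√(r * v)) := by gcongr
    _ = 2 ^ (k - 1) * (v ^ (a - 1) * exp (-√(r * v)) +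
          v ^ (a + k - 1) * exp (-√(r * v))) := by
      rw [show a + k - 1 = a - 1 + k by ring, rpow_add hv, rpow_natCast]
      ring

lemma integrableOn_rpow_mul_exp_neg_sqrt_mul_sqrt_pow {a r : ℝ} (ha : 0 < a) (s : ℝ)
    (hr : 0 < r) (k : ℕ) :
    IntegrableOn (fun v => v ^ (a - 1) * (1 + v) ^ s *
      (exp (-√(r * (1 + v))) * √(r * (1 + v)) ^ k)) (Ioi 0) := by
  refine IntegrableOn.congr_fun ((integrableOn_rpow_mul_one_add_rpow_mul_exp_neg_sqrt ha
    (s + k / 2) hr).const_mul (√r ^ k)) (fun v (hv : 0 < v) => ?_) measurableSet_Ioi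
  have hv1 : 0 < 1 + v := by positivity
  have hsqrt : (1 + v) ^ (k / 2 : ℝ) = √(1 + v) ^ k := by
    rw [sqrt_eq_rpow, ← rpow_natCast, ← rpow_mul hv1.le]
    ring_nf
  simp only [sqrt_mul hr.le, mul_pow, rpow_add hv1, hsqrt]
  ring

lemma integral_Ioi_eq_mul_integral_comp_mul_left {c : ℝ} (hc : 0 < c) (g : ℝ → ℝ) :
    ∫ x in Ioi 0, g x = c * ∫ v in Ioi 0, g (c * v) := by
  simpa using (integral_comp_mul_left_Ioi' g 0 hc).symm

lemma rpow_neg_sub_half {x : ℝ} (hx : 0 < x) (m k : ℕ) :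
    x ^ (-((m : ℝ) - k / 2)) = √x ^ k / x ^ m := by
  rw [neg_sub, rpow_sub hx, rpow_natCast, sqrt_eq_rpow, ← rpow_natCast (x ^ (1 / 2 : ℝ)),
    ← rpow_mul hx.le]
  ring_nf

lemma Vhalf_succ_mul_two_pow (m k : ℕ) {α : ℝ} (hα : 0 < α) :
    Vhalf (m + 1) (k + 1) α * 2 ^ k = exp α * α / (2 * Gamma (m + 1)) *
      ∫ v in Ioi 0, v ^ m * (1 + v) ^ (-(m + 1 / 2) : ℝ) *
        (exp (-√(α ^ 2 * (1 + v))) * √(α ^ 2 * (1 + v)) ^ k) := by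
  have hscale : ∀ v ∈ Ioi (0 : ℝ), (1 / 2 * v) ^ (m + 1 - 1) *
      (1 / 2 + 1 / 2 * v) ^ (-(((m + 1 : ℕ) : ℝ) - ((k + 1 : ℕ) : ℝ) / 2)) *
        exp (-α * (√(1 + 2 * (1 / 2 * v)) - 1)) =
      2 * exp α / (√2 ^ (k + 1) * α ^ k) * (v ^ m * (1 + v) ^ (-(m + 1 / 2) : ℝ) *
        (exp (-√(α ^ 2 * (1 + v))) * √(α ^ 2 * (1 + v)) ^ k)) := by
    intro v (hv : 0 < v)
    have hv1 : 0 < 1 + v := by positivity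
    have hhalf := rpow_neg_sub_half hv1 (m + 1) 1
    rw [show -(((m + 1 : ℕ) : ℝ) - (1 : ℕ) / 2) = -(m + 1 / 2) by push_cast; ring] at hhalf
    rw [rpow_neg_sub_half (by positivity), hhalf, sqrt_mul (by positivity), sqrt_sq hα.le,
      one_div_mul_eq_div, ← add_div, sqrt_div hv1.le, mul_div_cancel₀ v two_ne_zero,
      show -α * (√(1 + v) - 1) = α + -(α * √(1 + v)) by ring, exp_add, Nat.add_sub_cancel, div_pow,
      div_pow, div_pow]
    field_simp
    ring
  have hconst : α ^ (k + 1) / √2 ^ (k + 1) / Gamma (m + 1) *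
      (1 / 2 * (2 * exp α / (√2 ^ (k + 1) * α ^ k))) * 2 ^ k = exp α * α / (2 * Gamma (m + 1)) := by
    have hsqrt : √2 ^ (k + 1) * √2 ^ (k + 1) = 2 ^ k * 2 := by
      rw [← mul_pow, mul_self_sqrt zero_le_two, pow_succ]
    calc _ = exp α * α * 2 ^ k / (√2 ^ (k + 1) * √2 ^ (k + 1) * Gamma (m + 1)) := by
          rw [pow_succ α]
          field_simp
      _ = _ := by rw [hsqrt]; field_simp
  rw [Vhalf, integral_Ioi_eq_mul_integral_comp_mul_left one_half_pos,
    setIntegral_congr_fun measurableSet_Ioi hscale, integral_const_mul, div_pow,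
    Nat.cast_add_one m, ← hconst]
  ring

lemma integral_integral_eq_toReal_lintegral {X Y : Type*} [MeasurableSpace X]
    [MeasurableSpace Y] {μ : Measure X} {ν : Measure Y} [SFinite μ] [SFinite ν] {f : X → Y → ℝ}
    (hf : AEStronglyMeasurable (Function.uncurry f) (μ.prod ν))
    (hnonneg : 0 ≤ᵐ[μ.prod ν] Function.uncurry f)
    (hfin : ∫⁻ x, ∫⁻ y, ENNReal.ofReal (f x y) ∂ν ∂μ ≠ ∞) :
    ∫ x, ∫ y, f x y ∂ν ∂μ = (∫⁻ x, ∫⁻ y, ENNReal.ofReal (f x y) ∂ν ∂μ).toReal := by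
  have hprod : ∫⁻ z, ENNReal.ofReal (Function.uncurry f z) ∂μ.prod ν =
      ∫⁻ x, ∫⁻ y, ENNReal.ofReal (f x y) ∂ν ∂μ :=
    lintegral_prod _ hf.aemeasurable.ennreal_ofReal
  have hint : Integrable (Function.uncurry f) (μ.prod ν) :=
    ⟨hf, (hasFiniteIntegral_iff_ofReal hnonneg).mpr (hprod ▸ hfin.lt_top)⟩
  rw [integral_integral hint, ← hprod]
  exact integral_eq_lintegral_of_nonneg_ae hnonneg hf

lemma integrableOn_rpow_mul_exp_neg_sqrt_mul_genFactPoly {a r : ℝ} (ha : 0 < a) (s : ℝ)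
    (hr : 0 < r) (σ : ℝ) (n : ℕ) :
    IntegrableOn (fun v => v ^ (a - 1) * (1 + v) ^ s *
      (exp (-√(r * (1 + v))) * (genFactPoly σ n).eval √(r * (1 + v)))) (Ioi 0) := by
  simp only [eval_genFactPoly, Finset.mul_sum, mul_left_comm _ (genFactCoeff _ _ _)]
  exact integrable_finsetSum _ fun k _ =>
    (integrableOn_rpow_mul_exp_neg_sqrt_mul_sqrt_pow ha s hr k).const_mul _

lemma sum_Vhalf_mul_genFactCoeff_eq_integral (m n : ℕ) {α : ℝ} (hα : 0 < α) :
    ∑ k ∈ Finset.range (n + 1), Vhalf (m + 1) (k + 1) α * 2 ^ k * genFactCoeff n k (1 / 2) =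
      exp α * α / (2 * Gamma (m + 1)) *
        ∫ v in Ioi 0, v ^ m * (1 + v) ^ (-(m + 1 / 2) : ℝ) * (exp (-√(α ^ 2 * (1 + v))) *
          (genFactPoly (1 / 2) n).eval √(α ^ 2 * (1 + v))) := by
  have hint : ∀ k, IntegrableOn (fun v => v ^ m * (1 + v) ^ (-(m + 1 / 2) : ℝ) *
      (exp (-√(α ^ 2 * (1 + v))) * √(α ^ 2 * (1 + v)) ^ k)) (Ioi 0) := fun k => by
    simpa only [add_sub_cancel_right, rpow_natCast] using
      integrableOn_rpow_mul_exp_neg_sqrt_mul_sqrt_pow (a := m + 1) (by positivity)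
        (-(m + 1 / 2) : ℝ) (show 0 < α ^ 2 by positivity) k
  simp only [eval_genFactPoly, Finset.mul_sum, mul_left_comm _ (genFactCoeff _ _ _)]
  rw [integral_finsetSum _ fun k _ => (hint k).const_mul _, Finset.mul_sum]
  refine Finset.sum_congr rfl fun k _ => ?_
  rw [Vhalf_succ_mul_two_pow m k hα, integral_const_mul]
  ring

lemma integral_massShareDensity {α : ℝ} (hα : 0 < α) (n : ℕ) {q : ℝ} (hq : -1 < q) :
    ∫ h in Ioi 0, ∫ p in Ioo 0 1, massShareDensity α n q h p =
      exp α * α * Gamma (q + 1) / Gamma (n + q + 3 / 2) *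
        ∫ v in Ioi 0, v ^ (n + q + 3 / 2 - 1) * (1 + v) ^ (-(q + 1 + n)) *
          (exp (-√(α ^ 2 * (1 + v))) * (genFactPoly (1 / 2) n).eval √(α ^ 2 * (1 + v))) := by
  have ha : 0 < n + q + 3 / 2 := by linarith [n.cast_nonneg (α := ℝ)]
  have hΓ : 0 < Gamma (q + 1) := Gamma_pos_of_pos (by linarith)
  have hcoef : 0 ≤ exp α * α * Gamma (q + 1) / Gamma (n + q + 3 / 2) := by positivity
  have hint := integrableOn_rpow_mul_exp_neg_sqrt_mul_genFactPoly ha (-(q + 1 + n))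
    (show 0 < α ^ 2 by positivity) (1 / 2) n
  have hpos : ∀ᵐ v ∂volume.restrict (Ioi 0), 0 ≤ v ^ (n + q + 3 / 2 - 1) *
      (1 + v) ^ (-(q + 1 + n)) * (exp (-√(α ^ 2 * (1 + v))) *
        (genFactPoly (1 / 2) n).eval √(α ^ 2 * (1 + v))) := by
    filter_upwards [ae_restrict_mem measurableSet_Ioi] with v (hv : 0 < v)
    have := eval_genFactPoly_nonneg n (σ := 1 / 2) (by norm_num) (sqrt_nonneg (α ^ 2 * (1 + v)))
    positivity
  have hdensity : 0 ≤ᵐ[(volume.restrict (Ioi 0)).prod (volume.restrict (Ioo 0 1))]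
      Function.uncurry (massShareDensity α n q) := by
    rw [Measure.prod_restrict]
    filter_upwards [ae_restrict_mem (measurableSet_Ioi.prod measurableSet_Ioo)] with z hz
    exact massShareDensity_nonneg α n q (le_of_lt hz.1) (Ioo_subset_Icc_self hz.2)
  have hlintegral := lintegral_massShareDensity_eq_mul_lintegral hα n hq
  rw [← ofReal_integral_eq_lintegral_ofReal hint hpos, ← ENNReal.ofReal_mul hcoef] at hlintegral
  rw [integral_integral_eq_toReal_lintegral
    (measurable_massShareDensity α n q).aestronglyMeasurable hdensity
    (hlintegral ▸ ENNReal.ofReal_ne_top), hlintegral,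
    ENNReal.toReal_ofReal (mul_nonneg hcoef (integral_nonneg_of_ae hpos))]

lemma sum_Vhalf_mul_genFactCoeff {α : ℝ} (hα : 0 < α) (n ℓ : ℕ) :
    ∑ k ∈ Finset.range (n + 1), Vhalf (n + ℓ + 1) (k + 1) α * 2 ^ k * genFactCoeff n k (1 / 2) =
      1 / (2 * Gamma (ℓ + 1 / 2)) *
        ∫ h in Ioi 0, ∫ p in Ioo 0 1, massShareDensity α n (ℓ - 1 / 2) h p := by
  rw [sum_Vhalf_mul_genFactCoeff_eq_integral (n + ℓ) n hα,
    integral_massShareDensity hα n (by linarith [ℓ.cast_nonneg (α := ℝ)]),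
    show (ℓ - 1 / 2 + 1 : ℝ) = ℓ + 1 / 2 by ring,
    show (n + (ℓ - 1 / 2) + 3 / 2 : ℝ) = (n + ℓ : ℕ) + 1 by push_cast; ring,
    show (ℓ + 1 / 2 + n : ℝ) = (n + ℓ : ℕ) + 1 / 2 by push_cast; ring]
  simp only [add_sub_cancel_right, rpow_natCast]
  field_simp

lemma sum_Icc_mul_genFactCoeff_sub_one {m n : ℕ} (hnm : n < m) (σ : ℝ) (w : ℕ → ℝ) :
    ∑ k ∈ Finset.Icc 1 m, w k * genFactCoeff n (k - 1) σ =
      ∑ k ∈ Finset.range (n + 1), w (k + 1) * genFactCoeff n k σ := by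
  rw [← Finset.Ico_succ_right_eq_Icc, Finset.sum_Ico_eq_sum_range]
  simp only [Nat.succ_eq_succ, Nat.succ_eq_add_one, Nat.add_sub_cancel, add_comm 1]
  refine (Finset.sum_subset (Finset.range_mono hnm) fun k _ hk => ?_).symm
  rw [genFactCoeff_eq_zero_of_lt (by simpa using hk), mul_zero]

end

/-- Case `0 < ℓ < m`, `σ = 1/2` of Lemma A.1: the probability that the next token
equals a symbol currently seen `ℓ` times under the NGGP with `σ = 1/2`. -/
theorem stmt15 (α : ℝ) (hα : 0 < α) (m ℓ : ℕ) (hℓ : 1 ≤ ℓ) (hℓm : ℓ < m) :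
    ((ℓ : ℝ) - 1 / 2) * (m.choose ℓ : ℝ) * risingFactorial (1 / 2) (ℓ - 1) *
        ∑ k ∈ Finset.Icc 1 m, Vhalf (m + 1) k α * 2 ^ (k - 1) * genFactCoeff (m - ℓ) (k - 1) (1 / 2)
      = ((1 / 2) * ((ℓ : ℝ) - 1 / 2) * (m.choose ℓ : ℝ) * risingFactorial (1 / 2) (ℓ - 1) /
            Real.Gamma ((ℓ : ℝ) + 1 / 2)) *
        ∫ h in Set.Ioi (0 : ℝ), ∫ p in Set.Ioo (0 : ℝ) 1,
          h ^ (-(1 / 2) : ℝ) * fHalf (h * p) * Real.exp (-h * α ^ 2 + α) *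
            p ^ (m - ℓ) * (1 - p) ^ ((ℓ : ℝ) - 1 / 2) := by
  obtain ⟨n, rfl⟩ := Nat.exists_eq_add_of_le' hℓm.le
  have hsum := sum_Icc_mul_genFactCoeff_sub_one (show n < n + ℓ by lia) (1 / 2)
    fun k => Vhalf (n + ℓ + 1) k α * 2 ^ (k - 1)
  simp only [Nat.add_sub_cancel] at hsum ⊢
  rw [hsum, sum_Vhalf_mul_genFactCoeff hα n ℓ]
  simp only [massShareDensity]
  ring
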